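/- arXiv:2502.00084 — 2 statements merged into one kernel-verified Lean document; each statement's English description precedes it below -/
import Mathlib

section
/- Let μ and ν be probability measures on ℝ^d, absolutely continuous with respect to Lebesgue measure, having finite moments of order 2 + δ for some δ > 0 and finite differential entropy. Let φ_0 be a Brenier potential from μ to ν and π_0 := the pushforward of μ by x ↦ (x, ∇φ_0(x)). Then there exists a constant C > 0, depending only on μ and ν, such that for every ε > 0 and every Schrödinger pair (f_ε, g_ε) for (μ, ν, ε) with associated entropic optimal plan π_ε, one has ∫ (|x−y|²/2) dπ_ε(x,y) − ∫ (|x−y|²/2) dπ_0(x,y) ≤ C ε. -/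
open MeasureTheory Real
open scoped RealInnerProductSpace

/-- `(f, g)` is a Schrödinger pair for `(μ, ν, ε)`: both Schrödinger equations hold, with all
the integrals involved finite (integrable nonnegative integrands) and positive. -/
def IsSchrodingerPair {d : ℕ} (μ ν : Measure (EuclideanSpace ℝ (Fin d))) (ε : ℝ)
    (f g : EuclideanSpace ℝ (Fin d) → ℝ) : Prop :=
  Measurable f ∧ Measurable g ∧
  (∀ x, Integrable (fun y => Real.exp ((g y - ‖x - y‖ ^ 2 / 2) / ε)) ν ∧
    0 < ∫ y, Real.exp ((g y - ‖x - y‖ ^ 2 / 2) / ε) ∂ν ∧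
    f x = -ε * Real.log (∫ y, Real.exp ((g y - ‖x - y‖ ^ 2 / 2) / ε) ∂ν)) ∧
  (∀ y, Integrable (fun x => Real.exp ((f x - ‖y - x‖ ^ 2 / 2) / ε)) μ ∧
    0 < ∫ x, Real.exp ((f x - ‖y - x‖ ^ 2 / 2) / ε) ∂μ ∧
    g y = -ε * Real.log (∫ x, Real.exp ((f x - ‖y - x‖ ^ 2 / 2) / ε) ∂μ))

/-- The entropic potential associated to a dual function `f`: `φ = ‖·‖²/2 - f`. -/
noncomputable def entPot {d : ℕ} (f : EuclideanSpace ℝ (Fin d) → ℝ) :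
    EuclideanSpace ℝ (Fin d) → ℝ :=
  fun x => ‖x‖ ^ 2 / 2 - f x

/-- `φ` is a Brenier potential from `μ` to `ν`: convex, differentiable, and its gradient
pushes `μ` forward to `ν`. -/
def IsBrenierPotential {d : ℕ} (μ ν : Measure (EuclideanSpace ℝ (Fin d)))
    (φ : EuclideanSpace ℝ (Fin d) → ℝ) : Prop :=
  ConvexOn ℝ Set.univ φ ∧ Differentiable ℝ φ ∧
  Measure.map (fun x => gradient φ x) μ = ν

/-- The entropic optimal plan `π_ε` associated to a Schrödinger pair `(f, g)`: its density
with respect to `μ ⊗ ν` is `(x,y) ↦ exp((f x + g y - ‖x-y‖²/2)/ε)`. -/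
noncomputable def entPlan {d : ℕ} (μ ν : Measure (EuclideanSpace ℝ (Fin d))) (ε : ℝ)
    (f g : EuclideanSpace ℝ (Fin d) → ℝ) :
    Measure (EuclideanSpace ℝ (Fin d) × EuclideanSpace ℝ (Fin d)) :=
  (μ.prod ν).withDensity
    (fun p => ENNReal.ofReal (Real.exp ((f p.1 + g p.2 - ‖p.1 - p.2‖ ^ 2 / 2) / ε)))

/-- A measure `ρ ≪ Leb` has finite differential entropy: `p log p` is Lebesgue-integrable,
where `p` is the Lebesgue density of `ρ`. -/
def HasFiniteDifferentialEntropy {d : ℕ} (ρ : Measure (EuclideanSpace ℝ (Fin d))) : Prop :=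
  Integrable
    (fun x => (ρ.rnDeriv volume x).toReal * Real.log ((ρ.rnDeriv volume x).toReal))
    (volume : Measure (EuclideanSpace ℝ (Fin d)))

/-!
Write `T = ∇φ₀` and use the Minty coordinate `u = x + y`, in which the graph of `T` is the graph of
the 1-Lipschitz resolvent `M = (id + T)⁻¹`. Three estimates are combined.

* The Donsker–Varadhan inequality for `π_ε`, tested against the Gaussian
  `exp (-|x + y|² - |x - M (x + y)|² / (2ε))`, whose total mass is of order `ε ^ (d / 2)`, bounds
  the entropy of `π_ε` below by `-(d / 2) log ε - (2ε)⁻¹ ∫ |x - M (x + y)|² dπ_ε` up to a constant.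
* Quadratic detachment `|x - M (x + y)|² ≤ φ₀ x + φ₀* y - ⟨x, y⟩`: the right-hand side integrates to
  the cost gap, so only half of `gap / ε` is lost in the previous bound.
* The dual value of a Schrödinger pair exceeds the optimal cost by at most
  `-(d / 2) ε log ε + O(ε)`, by comparing `π_ε` with the coupling that resamples `T x` within the
  cells of side `√ε` in the variable `u = x + T x`. By firm nonexpansiveness of `M`, two points of
  a cell have Bregman divergence at most `d ε / 4`.

The two `(d / 2) log ε` terms cancel. For `ε ≥ 1` the moment bound on the cost suffices.
-/

section JensenInequality

variable {α : Type*} [MeasurableSpace α] {μ ρ : Measure α}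

lemma integral_le_log_of_lintegral_exp_le [IsProbabilityMeasure μ] {h : α → ℝ}
    (hh : Integrable h μ) {S : ℝ}
    (hS : ∫⁻ x, ENNReal.ofReal (exp (h x)) ∂μ ≤ ENNReal.ofReal S) :
    ∫ x, h x ∂μ ≤ log S := by
  have hexp_meas : AEStronglyMeasurable (fun x => exp (h x)) μ :=
    continuous_exp.comp_aestronglyMeasurable hh.aestronglyMeasurable
  have hexp_nonneg : 0 ≤ᵐ[μ] fun x => exp (h x) := ae_of_all _ fun x => (exp_pos _).le
  have hexp_int : Integrable (fun x => exp (h x)) μ :=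
    ⟨hexp_meas, (hasFiniteIntegral_iff_ofReal hexp_nonneg).2 (hS.trans_lt ENNReal.ofReal_lt_top)⟩
  have hjensen : exp (∫ x, h x ∂μ) ≤ ∫ x, exp (h x) ∂μ :=
    convexOn_exp.map_integral_le continuous_exp.continuousOn isClosed_univ
      (ae_of_all _ fun _ => Set.mem_univ _) hh hexp_int
  have hle : ∫ x, exp (h x) ∂μ ≤ max S 0 := by
    rw [integral_eq_lintegral_of_nonneg_ae hexp_nonneg hexp_meas, ← ENNReal.toReal_ofReal']
    exact ENNReal.toReal_mono ENNReal.ofReal_ne_top hS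
  have hexp_le : exp (∫ x, h x ∂μ) ≤ S :=
    (le_max_iff.1 (hjensen.trans hle)).resolve_right (exp_pos _).not_ge
  exact (le_log_iff_exp_le ((exp_pos _).trans_le hexp_le)).2 hexp_le

/-- The Donsker–Varadhan inequality. -/
lemma integral_le_integral_llr_add_log [IsProbabilityMeasure μ] [SigmaFinite ρ] (hμρ : μ ≪ ρ)
    {l : α → ℝ} (hlm : Measurable l) (hl : Integrable l μ) (hllr : Integrable (llr μ ρ) μ) {S : ℝ}
    (hS : ∫⁻ x, ENNReal.ofReal (exp (l x)) ∂ρ ≤ ENNReal.ofReal S) :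
    ∫ x, l x ∂μ ≤ ∫ x, llr μ ρ x ∂μ + log S := by
  have hexp_meas : Measurable fun x => ENNReal.ofReal (exp (l x)) := hlm.exp.ennreal_ofReal
  have hexp : ∫⁻ x, ENNReal.ofReal (exp (l x - llr μ ρ x)) ∂μ ≤ ENNReal.ofReal S := calc
    _ = ∫⁻ x, ρ.rnDeriv μ x * ENNReal.ofReal (exp (l x)) ∂μ := by
      refine lintegral_congr_ae ?_
      filter_upwards [exp_neg_llr hμρ, Measure.rnDeriv_lt_top ρ μ] with x hx hfin
      rw [sub_eq_neg_add, exp_add, hx, ENNReal.ofReal_mul ENNReal.toReal_nonneg,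
        ENNReal.ofReal_toReal hfin.ne]
    _ = ∫⁻ x, ENNReal.ofReal (exp (l x)) ∂(μ.withDensity (ρ.rnDeriv μ)) :=
      (lintegral_withDensity_eq_lintegral_mul _ (Measure.measurable_rnDeriv ρ μ) hexp_meas).symm
    _ ≤ ∫⁻ x, ENNReal.ofReal (exp (l x)) ∂ρ :=
      lintegral_mono' (Measure.withDensity_rnDeriv_le ρ μ) le_rfl
    _ ≤ ENNReal.ofReal S := hS
  have h := integral_le_log_of_lintegral_exp_le (hl.sub hllr) hexp
  rw [integral_sub' hl hllr] at h
  linarith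

end JensenInequality

section LogLikelihoodRatio

variable {α β : Type*} [MeasurableSpace α] [MeasurableSpace β]

lemma rnDeriv_toReal_pos {μ ρ : Measure α} [SigmaFinite μ] [SigmaFinite ρ] (h : μ ≪ ρ) :
    ∀ᵐ x ∂μ, 0 < (μ.rnDeriv ρ x).toReal := by
  filter_upwards [Measure.rnDeriv_pos h, h.ae_le (Measure.rnDeriv_lt_top μ ρ)] with x hpos hfin
  exact ENNReal.toReal_pos hpos.ne' hfin.ne

lemma llr_withDensity_exp {μ ρ : Measure α} [SigmaFinite μ] [SigmaFinite ρ] (h : μ ≪ ρ)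
    {t : α → ℝ} (ht : Measurable t) :
    llr (μ.withDensity fun x => ENNReal.ofReal (exp (t x))) ρ =ᵐ[μ] fun x => t x + llr μ ρ x := by
  have hderiv := Measure.rnDeriv_withDensity_left (μ := μ) (ν := ρ)
    ht.exp.ennreal_ofReal.aemeasurable (ae_of_all _ fun _ => ENNReal.ofReal_ne_top)
  filter_upwards [h.ae_le hderiv, rnDeriv_toReal_pos h] with x hx hpos
  rw [llr, hx, ENNReal.toReal_mul, ENNReal.toReal_ofReal (exp_pos _).le,
    log_mul (exp_pos _).ne' hpos.ne', log_exp, llr]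

lemma rnDeriv_prod {μ ρ : Measure α} {ν σ : Measure β} [SigmaFinite μ] [SigmaFinite ν]
    [SigmaFinite ρ] [SigmaFinite σ] (hμ : μ ≪ ρ) (hν : ν ≪ σ) :
    (μ.prod ν).rnDeriv (ρ.prod σ) =ᵐ[ρ.prod σ] fun z => μ.rnDeriv ρ z.1 * ν.rnDeriv σ z.2 := by
  have hμm := Measure.measurable_rnDeriv μ ρ
  have hνm := Measure.measurable_rnDeriv ν σ
  have hprod : μ.prod ν = (ρ.prod σ).withDensity fun z => μ.rnDeriv ρ z.1 * ν.rnDeriv σ z.2 := by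
    rw [← prod_withDensity hμm hνm, Measure.withDensity_rnDeriv_eq _ _ hμ,
      Measure.withDensity_rnDeriv_eq _ _ hν]
  rw [hprod]
  exact Measure.rnDeriv_withDensity _ (by fun_prop)

lemma llr_prod {μ ρ : Measure α} {ν σ : Measure β} [SigmaFinite μ] [SigmaFinite ν]
    [SigmaFinite ρ] [SigmaFinite σ] (hμ : μ ≪ ρ) (hν : ν ≪ σ) :
    llr (μ.prod ν) (ρ.prod σ) =ᵐ[μ.prod ν] fun z => llr μ ρ z.1 + llr ν σ z.2 := by
  filter_upwards [(hμ.prod hν).ae_le (rnDeriv_prod hμ hν),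
    Measure.quasiMeasurePreserving_fst.ae (rnDeriv_toReal_pos hμ),
    Measure.quasiMeasurePreserving_snd.ae (rnDeriv_toReal_pos hν)] with z hz hμpos hνpos
  rw [llr, hz, ENNReal.toReal_mul, log_mul hμpos.ne' hνpos.ne', llr, llr]

lemma llr_withDensity_exp_prod {μ ρ : Measure α} {ν σ : Measure β} [SigmaFinite μ] [SigmaFinite ν]
    [SigmaFinite ρ] [SigmaFinite σ] (hμ : μ ≪ ρ) (hν : ν ≪ σ) {t : α × β → ℝ} (ht : Measurable t) :
    llr ((μ.prod ν).withDensity fun z => ENNReal.ofReal (exp (t z))) (ρ.prod σ) =ᵐ[μ.prod ν]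
      fun z => t z + (llr μ ρ z.1 + llr ν σ z.2) := by
  filter_upwards [llr_withDensity_exp (hμ.prod hν) ht, llr_prod hμ hν] with z hz hprod
  rw [hz, hprod]

lemma integrable_neg_part_withDensity_exp {ρ : Measure α} [IsFiniteMeasure ρ] {t : α → ℝ}
    (ht : Measurable t) :
    Integrable (fun x => max (-t x) 0) (ρ.withDensity fun x => ENNReal.ofReal (exp (t x))) := by
  have hmeas : Measurable fun x => max (-t x) 0 := by fun_prop
  have hmul_le : ∀ s : ℝ, exp s * max (-s) 0 ≤ 1 := fun s => calc
    exp s * max (-s) 0 ≤ exp s * exp (-s) := by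
      gcongr
      exact max_le (by linarith [add_one_le_exp (-s)]) (exp_pos _).le
    _ = 1 := by rw [← exp_add, add_neg_cancel, exp_zero]
  refine ⟨hmeas.aestronglyMeasurable, ?_⟩
  rw [hasFiniteIntegral_iff_ofReal (ae_of_all _ fun x => le_max_right (-t x) 0),
    lintegral_withDensity_eq_lintegral_mul _ ht.exp.ennreal_ofReal hmeas.ennreal_ofReal]
  refine (lintegral_mono (g := 1) fun x => ?_).trans_lt (by simp)
  rw [Pi.mul_apply, ← ENNReal.ofReal_mul (exp_pos _).le]
  exact ENNReal.ofReal_le_one.2 (hmul_le (t x))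

end LogLikelihoodRatio

section Coupling

variable {α β : Type*} [MeasurableSpace α] [MeasurableSpace β]

/-- `γ` is a coupling (transport plan) of `μ` and `ν`: its marginals are `μ` and `ν`. -/
structure IsCoupling (γ : Measure (α × β)) (μ : Measure α) (ν : Measure β) : Prop where
  measurePreserving_fst : MeasurePreserving Prod.fst γ μ
  measurePreserving_snd : MeasurePreserving Prod.snd γ ν

lemma integral_comp_of_measurePreserving {μ : Measure α} {ν : Measure β} {T : α → β}
    (hT : MeasurePreserving T μ ν) {f : β → ℝ} (hf : AEStronglyMeasurable f ν) :
    ∫ x, f (T x) ∂μ = ∫ y, f y ∂ν := by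
  rw [← hT.map_eq] at hf ⊢
  exact (integral_map hT.aemeasurable hf).symm

namespace IsCoupling

variable {γ : Measure (α × β)} {μ : Measure α} {ν : Measure β}

lemma isProbabilityMeasure [IsProbabilityMeasure μ] (hγ : IsCoupling γ μ ν) :
    IsProbabilityMeasure γ :=
  have : IsProbabilityMeasure (γ.map Prod.fst) :=
    hγ.measurePreserving_fst.map_eq ▸ inferInstance
  Measure.isProbabilityMeasure_of_map Prod.fst

lemma integrable_fst (hγ : IsCoupling γ μ ν) {f : α → ℝ} (hf : Integrable f μ) :
    Integrable (fun p => f p.1) γ :=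
  hγ.measurePreserving_fst.integrable_comp_of_integrable hf

lemma integrable_snd (hγ : IsCoupling γ μ ν) {g : β → ℝ} (hg : Integrable g ν) :
    Integrable (fun p => g p.2) γ :=
  hγ.measurePreserving_snd.integrable_comp_of_integrable hg

lemma integrable_add (hγ : IsCoupling γ μ ν) {f : α → ℝ} {g : β → ℝ} (hf : Integrable f μ)
    (hg : Integrable g ν) : Integrable (fun p => f p.1 + g p.2) γ :=
  (hγ.integrable_fst hf).add (hγ.integrable_snd hg)

lemma integral_add (hγ : IsCoupling γ μ ν) {f : α → ℝ} {g : β → ℝ} (hf : Integrable f μ)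
    (hg : Integrable g ν) : ∫ p, (f p.1 + g p.2) ∂γ = ∫ x, f x ∂μ + ∫ y, g y ∂ν := by
  rw [MeasureTheory.integral_add (hγ.integrable_fst hf) (hγ.integrable_snd hg),
    integral_comp_of_measurePreserving hγ.measurePreserving_fst hf.aestronglyMeasurable,
    integral_comp_of_measurePreserving hγ.measurePreserving_snd hg.aestronglyMeasurable]

end IsCoupling

lemma isCoupling_withDensity {μ : Measure α} {ν : Measure β} [SFinite μ] [SFinite ν]
    {D : α × β → ENNReal} (hD : Measurable D) (hfst : ∀ᵐ x ∂μ, ∫⁻ y, D (x, y) ∂ν = 1)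
    (hsnd : ∀ᵐ y ∂ν, ∫⁻ x, D (x, y) ∂μ = 1) :
    IsCoupling ((μ.prod ν).withDensity D) μ ν where
  measurePreserving_fst := by
    refine ⟨measurable_fst, Measure.ext fun s hs => ?_⟩
    rw [Measure.map_apply measurable_fst hs, withDensity_apply _ (measurable_fst hs),
      ← Set.prod_univ, setLIntegral_prod _ hD.aemeasurable, Measure.restrict_univ,
      setLIntegral_congr_fun_ae hs (hfst.mono fun x hx _ => hx), setLIntegral_one]
  measurePreserving_snd := by
    refine ⟨measurable_snd, Measure.ext fun s hs => ?_⟩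
    rw [Measure.map_apply measurable_snd hs, withDensity_apply _ (measurable_snd hs),
      ← Set.univ_prod, setLIntegral_prod_symm _ hD.aemeasurable, Measure.restrict_univ,
      setLIntegral_congr_fun_ae hs (hsnd.mono fun y hy _ => hy), setLIntegral_one]

end Coupling

section BlockCoupling

variable {X ι : Type*} [MeasurableSpace X] {μ : Measure X} {k : X → ι}

/-- The density with respect to `μ ⊗ μ` of the block coupling: on each cell `k ⁻¹' {j}`, both
coordinates are drawn independently from `μ` conditioned on that cell. -/
noncomputable def blockDensity (μ : Measure X) (k : X → ι) : X × X → ENNReal :=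
  {z | k z.1 = k z.2}.indicator fun z => (μ (k ⁻¹' {k z.1}))⁻¹

/-- The block coupling of `μ` with itself along the labelling `k` of the cells of a partition. -/
noncomputable def blockCoupling (μ : Measure X) (k : X → ι) : Measure (X × X) :=
  (μ.prod μ).withDensity (blockDensity μ k)

lemma blockDensity_swap (x y : X) : blockDensity μ k (x, y) = blockDensity μ k (y, x) := by
  by_cases h : k x = k y
  · simp [blockDensity, h]
  · simp [blockDensity, h, Ne.symm h]

variable [MeasurableSpace ι] [Countable ι] [DiscreteMeasurableSpace ι]

lemma measurable_blockDensity (hk : Measurable k) : Measurable (blockDensity μ k) := by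
  have hcell : Measurable fun z : X × X => (μ (k ⁻¹' {k z.1}))⁻¹ :=
    (Measurable.of_discrete (f := fun j => (μ (k ⁻¹' {j}))⁻¹)).comp (hk.comp measurable_fst)
  exact hcell.indicator <|
    (hk.comp measurable_fst).prodMk (hk.comp measurable_snd)
      (MeasurableSet.of_discrete (s := Set.diagonal ι))

lemma ae_measure_fiber_ne_zero (hk : Measurable k) : ∀ᵐ x ∂μ, μ (k ⁻¹' {k x}) ≠ 0 := by
  refine ae_of_ae_map (p := fun j => μ (k ⁻¹' {j}) ≠ 0) hk.aemeasurable ?_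
  rw [ae_iff_of_countable]
  exact fun j hj => by rwa [Measure.map_apply hk (measurableSet_singleton j)] at hj

lemma lintegral_blockDensity [IsFiniteMeasure μ] (hk : Measurable k) {x : X}
    (hx : μ (k ⁻¹' {k x}) ≠ 0) : ∫⁻ y, blockDensity μ k (x, y) ∂μ = 1 := calc
  _ = ∫⁻ y, (k ⁻¹' {k x}).indicator (fun _ => (μ (k ⁻¹' {k x}))⁻¹) y ∂μ := by
    refine lintegral_congr fun y => ?_
    by_cases h : k x = k y
    · simp [blockDensity, h]
    · simp [blockDensity, h, Ne.symm h]
  _ = 1 := by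
    rw [lintegral_indicator_const (hk (measurableSet_singleton _)),
      ENNReal.inv_mul_cancel hx (measure_ne_top _ _)]

lemma isCoupling_blockCoupling [IsFiniteMeasure μ] (hk : Measurable k) :
    IsCoupling (blockCoupling μ k) μ μ := by
  have hmass : ∀ᵐ x ∂μ, ∫⁻ y, blockDensity μ k (x, y) ∂μ = 1 := by
    filter_upwards [ae_measure_fiber_ne_zero hk] with x hx using lintegral_blockDensity hk hx
  refine isCoupling_withDensity (measurable_blockDensity hk) hmass ?_
  simpa only [blockDensity_swap] using hmass

lemma ae_blockCoupling_eq (hk : Measurable k) : ∀ᵐ z ∂(blockCoupling μ k), k z.1 = k z.2 := by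
  rw [blockCoupling, ae_withDensity_iff (measurable_blockDensity hk)]
  refine ae_of_all _ fun z hz => ?_
  contrapose! hz
  simp [blockDensity, hz]

lemma lintegral_inv_measure_fiber_mul_le (hk : Measurable k) (Λ : Measure ι) :
    ∫⁻ x, (μ (k ⁻¹' {k x}))⁻¹ * Λ {k x} ∂μ ≤ Λ Set.univ := calc
  _ = ∫⁻ j, (μ (k ⁻¹' {j}))⁻¹ * Λ {j} ∂(μ.map k) :=
    (lintegral_map Measurable.of_discrete hk).symm
  _ = ∑' j, (μ (k ⁻¹' {j}))⁻¹ * Λ {j} * μ (k ⁻¹' {j}) := by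
    simp only [lintegral_countable', Measure.map_apply hk (measurableSet_singleton _)]
  _ ≤ ∑' j, 1 * Λ {j} := by
    refine ENNReal.tsum_le_tsum fun j => ?_
    rw [mul_right_comm]
    gcongr
    exact ENNReal.inv_mul_le_one _
  _ = Λ Set.univ := by rw [← lintegral_countable', lintegral_one]

lemma lintegral_blockCoupling_le [SFinite μ] (hk : Measurable k) {Λ : Measure ι}
    {R : X × X → ENNReal} (hRm : Measurable R) (hR : ∀ x, ∫⁻ y, R (x, y) ∂μ ≤ 1) :
    ∫⁻ z, R z * Λ {k z.1} ∂(blockCoupling μ k) ≤ Λ Set.univ := by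
  have hΛ : Measurable fun z : X × X => Λ {k z.1} :=
    (Measurable.of_discrete (f := fun j : ι => Λ {j})).comp (hk.comp measurable_fst)
  have hD := measurable_blockDensity (μ := μ) hk
  have hG : Measurable fun z => R z * Λ {k z.1} := hRm.mul hΛ
  rw [blockCoupling, lintegral_withDensity_eq_lintegral_mul _ hD hG,
    lintegral_prod _ (hD.mul hG).aemeasurable]
  refine (lintegral_mono fun x => ?_).trans (lintegral_inv_measure_fiber_mul_le hk Λ)
  calc ∫⁻ y, blockDensity μ k (x, y) * (R (x, y) * Λ {k x}) ∂μ
      ≤ ∫⁻ y, ((μ (k ⁻¹' {k x}))⁻¹ * Λ {k x}) * R (x, y) ∂μ := by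
        refine lintegral_mono fun y => ?_
        rw [mul_comm (R _), ← mul_assoc]
        gcongr
        exact Set.indicator_le_self' (fun _ _ => zero_le) _
    _ = ((μ (k ⁻¹' {k x}))⁻¹ * Λ {k x}) * ∫⁻ y, R (x, y) ∂μ :=
        lintegral_const_mul _ (hRm.comp measurable_prodMk_left)
    _ ≤ (μ (k ⁻¹' {k x}))⁻¹ * Λ {k x} := mul_le_of_le_one_right' (hR x)

lemma integral_add_integral_le_log_of_exp_add_le [IsProbabilityMeasure μ] (hk : Measurable k)
    {Λ : Measure ι} [IsFiniteMeasure Λ] {A B : X → ℝ} (hA : Integrable A μ) (hB : Integrable B μ)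
    {R : X × X → ENNReal} (hRm : Measurable R) (hR : ∀ x, ∫⁻ y, R (x, y) ∂μ ≤ 1)
    (hAB : ∀ x y, k x = k y → ENNReal.ofReal (exp (A x + B y)) ≤ R (x, y) * Λ {k x}) :
    ∫ x, A x ∂μ + ∫ x, B x ∂μ ≤ log (Λ.real Set.univ) := by
  have hγ := isCoupling_blockCoupling (μ := μ) hk
  have := hγ.isProbabilityMeasure
  rw [← hγ.integral_add hA hB]
  refine integral_le_log_of_lintegral_exp_le (hγ.integrable_add hA hB) ?_
  rw [ofReal_measureReal]
  refine (lintegral_mono_ae ?_).trans (lintegral_blockCoupling_le hk hRm hR)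
  filter_upwards [ae_blockCoupling_eq hk] with z hz using hAB z.1 z.2 hz

end BlockCoupling

section ConvexGradient

variable {E : Type*} [NormedAddCommGroup E] [InnerProductSpace ℝ E]

lemma norm_le_norm_add_of_inner_nonneg {a b : E} (h : 0 ≤ ⟪a, b⟫) : ‖a‖ ≤ ‖a + b‖ := by
  refine le_of_sq_le_sq ?_ (norm_nonneg _)
  rw [norm_add_sq_real]
  linarith [sq_nonneg ‖b‖]

lemma four_mul_inner_le_norm_add_sq (a b : E) : 4 * ⟪a, b⟫ ≤ ‖a + b‖ ^ 2 := by
  linarith [norm_add_sq_real a b, norm_sub_sq_real a b, sq_nonneg ‖a - b‖]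

variable [CompleteSpace E] {φ : E → ℝ}

lemma add_inner_gradient_le {s : Set E} (hc : ConvexOn ℝ s φ) {x y : E} (hx : x ∈ s) (hy : y ∈ s)
    (hd : DifferentiableAt ℝ φ x) : φ x + ⟪gradient φ x, y - x⟫ ≤ φ y := by
  have hderiv : HasDerivAt (φ ∘ AffineMap.lineMap x y) ⟪gradient φ x, y - x⟫ (0 : ℝ) := by
    rw [inner_gradient_left]
    exact hd.hasFDerivAt.comp_hasDerivAt_of_eq 0 AffineMap.hasDerivAt_lineMap (by simp)
  have hslope := (hc.comp_affineMap (AffineMap.lineMap x y)).le_slope_of_hasDerivAt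
    (by simpa using hx) (by simpa using hy) one_pos hderiv
  simp only [slope_def_field, Function.comp_apply, AffineMap.lineMap_apply_one,
    AffineMap.lineMap_apply_zero, sub_zero, div_one] at hslope
  linarith

lemma inner_gradient_sub_nonneg (hc : ConvexOn ℝ Set.univ φ) (hd : Differentiable ℝ φ) (x y : E) :
    0 ≤ ⟪x - y, gradient φ x - gradient φ y⟫ := by
  have hx := add_inner_gradient_le hc (Set.mem_univ x) (Set.mem_univ y) (hd x)
  have hy := add_inner_gradient_le hc (Set.mem_univ y) (Set.mem_univ x) (hd y)
  rw [← neg_sub x y, inner_neg_right] at hx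
  rw [real_inner_comm, inner_sub_left]
  linarith

lemma measurable_gradient [MeasurableSpace E] [BorelSpace E] (φ : E → ℝ) :
    Measurable (gradient φ) :=
  (InnerProductSpace.toDual ℝ E).symm.continuous.measurable.comp (measurable_fderiv ℝ φ)

lemma bregman_le_norm_sub_sq_div_four (hc : ConvexOn ℝ Set.univ φ) (hd : Differentiable ℝ φ)
    (x y : E) :
    φ x - φ y - ⟪x - y, gradient φ y⟫ ≤ ‖(x + gradient φ x) - (y + gradient φ y)‖ ^ 2 / 4 := by
  have hx := add_inner_gradient_le hc (Set.mem_univ x) (Set.mem_univ y) (hd x)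
  have h := four_mul_inner_le_norm_add_sq (x - y) (gradient φ x - gradient φ y)
  rw [← neg_sub x y, inner_neg_right, real_inner_comm] at hx
  rw [sub_add_sub_comm, inner_sub_right] at h
  linarith

lemma norm_sub_sq_le_of_add_gradient_eq (hc : ConvexOn ℝ Set.univ φ) (hd : Differentiable ℝ φ)
    {x y m : E} (hm : m + gradient φ m = x + y) :
    ‖x - m‖ ^ 2 ≤ φ x + (⟪m, y⟫ - φ m) - ⟪x, y⟫ := by
  have h := add_inner_gradient_le hc (Set.mem_univ m) (Set.mem_univ x) (hd m)
  have hgrad : gradient φ m = (x - m) + y := by rw [sub_add_eq_add_sub, ← hm, add_sub_cancel_left]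
  rw [hgrad, inner_add_left, real_inner_self_eq_norm_sq, inner_sub_right, real_inner_comm x y,
    real_inner_comm m y] at h
  linarith

end ConvexGradient

section Resolvent

variable {E : Type*} [NormedAddCommGroup E] [InnerProductSpace ℝ E] {φ : E → ℝ}

open Filter in
lemma tendsto_add_norm_sub_sq_cocompact [FiniteDimensional ℝ E] (hc : ConvexOn ℝ Set.univ φ)
    (hd : Differentiable ℝ φ) (u : E) :
    Tendsto (fun x => φ x + ‖x - u‖ ^ 2 / 2) (cocompact E) atTop := by
  have := FiniteDimensional.proper ℝ E
  have hlow : ∀ x, φ u + ‖x - u‖ * (‖x - u‖ / 2 - ‖gradient φ u‖) ≤ φ x + ‖x - u‖ ^ 2 / 2 := by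
    intro x
    have hgrad := add_inner_gradient_le hc (Set.mem_univ u) (Set.mem_univ x) (hd u)
    have hcs := neg_le_of_abs_le (abs_real_inner_le_norm (gradient φ u) (x - u))
    linarith
  have hdist : Tendsto (fun x => ‖x - u‖) (cocompact E) atTop := by
    simpa only [dist_eq_norm] using tendsto_dist_right_cocompact_atTop u
  refine tendsto_atTop_mono hlow (tendsto_atTop_add_const_left _ _ (hdist.atTop_mul_atTop₀ ?_))
  exact tendsto_atTop_add_const_right _ _ (hdist.atTop_div_const two_pos)

lemma add_gradient_eq_of_isLocalMin [CompleteSpace E] {u x : E} (hd : DifferentiableAt ℝ φ x)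
    (hmin : IsLocalMin (fun z => φ z + ‖z - u‖ ^ 2 / 2) x) : x + gradient φ x = u := by
  have hquad : HasFDerivAt (fun z => ‖z - u‖ ^ 2 / 2) (innerSL ℝ (x - u)) x := by
    have h := ((hasFDerivAt_id x).sub_const u).norm_sq.mul_const (2⁻¹ : ℝ)
    rw [ContinuousLinearMap.comp_id, ← Nat.cast_smul_eq_nsmul ℝ, smul_smul, Nat.cast_ofNat,
      inv_mul_cancel₀ two_ne_zero, one_smul] at h
    simpa only [div_eq_mul_inv, id] using h
  have hzero := hmin.hasFDerivAt_eq_zero (hd.hasFDerivAt.add hquad)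
  refine ext_inner_right ℝ fun v => ?_
  have hv : ⟪gradient φ x, v⟫ + (⟪x, v⟫ - ⟪u, v⟫) = 0 := by
    simpa [inner_gradient_left, inner_sub_left] using DFunLike.congr_fun hzero v
  rw [inner_add_left]
  linarith

lemma exists_lipschitz_resolvent [FiniteDimensional ℝ E] (hc : ConvexOn ℝ Set.univ φ)
    (hd : Differentiable ℝ φ) :
    ∃ M : E → E, LipschitzWith 1 M ∧ ∀ u, M u + gradient φ (M u) = u := by
  have hsurj : ∀ u, ∃ x, x + gradient φ x = u := fun u => by
    have hcont : Continuous fun x => φ x + ‖x - u‖ ^ 2 / 2 := by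
      have := hd.continuous
      fun_prop
    obtain ⟨x, hx⟩ := hcont.exists_forall_le (tendsto_add_norm_sub_sq_cocompact hc hd u)
    exact ⟨x, add_gradient_eq_of_isLocalMin (hd x) (.of_forall hx)⟩
  choose M hM using hsurj
  refine ⟨M, LipschitzWith.of_dist_le_mul fun u v => ?_, hM⟩
  have h := norm_le_norm_add_of_inner_nonneg (inner_gradient_sub_nonneg hc hd (M u) (M v))
  rwa [sub_add_sub_comm, hM, hM, ← dist_eq_norm, ← dist_eq_norm, ← one_mul (dist u v)] at h

end Resolvent

section FenchelConjugate

variable {E : Type*} [NormedAddCommGroup E] [InnerProductSpace ℝ E]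

/-- The Fenchel conjugate `φ* y = sup_x (⟨x, y⟩ - φ x)`, with values in `EReal` since the
supremum can be infinite. -/
noncomputable def fenchelConjugate (φ : E → ℝ) (y : E) : EReal :=
  ⨆ x, ((⟪x, y⟫ - φ x : ℝ) : EReal)

variable {φ : E → ℝ}

lemma inner_sub_le_fenchelConjugate (x y : E) :
    ((⟪x, y⟫ - φ x : ℝ) : EReal) ≤ fenchelConjugate φ y :=
  le_iSup (fun x => ((⟪x, y⟫ - φ x : ℝ) : EReal)) x

lemma inner_sub_le_toReal_fenchelConjugate {y : E} (hy : fenchelConjugate φ y ≠ ⊤) (x : E) :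
    ⟪x, y⟫ - φ x ≤ (fenchelConjugate φ y).toReal :=
  EReal.coe_le_coe_iff.1 ((inner_sub_le_fenchelConjugate x y).trans (EReal.le_coe_toReal hy))

lemma measurable_fenchelConjugate [MeasurableSpace E] [BorelSpace E] (φ : E → ℝ) :
    Measurable (fenchelConjugate φ) := by
  refine (lowerSemicontinuous_iSup fun x => Continuous.lowerSemicontinuous ?_).measurable
  exact continuous_coe_real_ereal.comp (by fun_prop)

lemma fenchelConjugate_gradient [CompleteSpace E] (hc : ConvexOn ℝ Set.univ φ)
    (hd : Differentiable ℝ φ) (x : E) :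
    fenchelConjugate φ (gradient φ x) = ((⟪x, gradient φ x⟫ - φ x : ℝ) : EReal) := by
  refine le_antisymm (iSup_le fun z => EReal.coe_le_coe_iff.2 ?_)
    (inner_sub_le_fenchelConjugate x _)
  have h := add_inner_gradient_le hc (Set.mem_univ x) (Set.mem_univ z) (hd x)
  rw [inner_sub_right, real_inner_comm, real_inner_comm x] at h
  linarith

end FenchelConjugate

section TransportCost

variable {E : Type*} [NormedAddCommGroup E] [MeasurableSpace E]

/-- The quadratic transport cost of a plan. -/
noncomputable def transportCost (γ : Measure (E × E)) : ℝ :=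
  ∫ p, ‖p.1 - p.2‖ ^ 2 / 2 ∂γ

lemma transportCost_nonneg (γ : Measure (E × E)) : 0 ≤ transportCost γ :=
  integral_nonneg fun _ => by positivity

namespace IsCoupling

variable [InnerProductSpace ℝ E] [BorelSpace E] [SecondCountableTopology E]
  {γ : Measure (E × E)} {μ ν : Measure E}

lemma integrable_norm_add_sq (hγ : IsCoupling γ μ ν) (hμ : Integrable (fun x => ‖x‖ ^ 2) μ)
    (hν : Integrable (fun y => ‖y‖ ^ 2) ν) : Integrable (fun p => ‖p.1 + p.2‖ ^ 2) γ := by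
  refine ((hγ.integrable_add hμ hν).const_mul 2).mono' (by fun_prop) (ae_of_all _ fun p => ?_)
  rw [norm_of_nonneg (sq_nonneg _), sq, sq, sq]
  linarith [parallelogram_law_with_norm ℝ p.1 p.2, mul_self_nonneg ‖p.1 - p.2‖]

lemma integral_norm_add_sq_le (hγ : IsCoupling γ μ ν) (hμ : Integrable (fun x => ‖x‖ ^ 2) μ)
    (hν : Integrable (fun y => ‖y‖ ^ 2) ν) :
    ∫ p, ‖p.1 + p.2‖ ^ 2 ∂γ ≤ 2 * (∫ x, ‖x‖ ^ 2 ∂μ + ∫ y, ‖y‖ ^ 2 ∂ν) := by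
  rw [← hγ.integral_add hμ hν, ← integral_const_mul]
  refine integral_mono (hγ.integrable_norm_add_sq hμ hν) ((hγ.integrable_add hμ hν).const_mul 2)
    fun p => ?_
  simp only [sq]
  linarith [parallelogram_law_with_norm ℝ p.1 p.2, mul_self_nonneg ‖p.1 - p.2‖]

lemma integrable_inner (hγ : IsCoupling γ μ ν) (hμ : Integrable (fun x => ‖x‖ ^ 2) μ)
    (hν : Integrable (fun y => ‖y‖ ^ 2) ν) : Integrable (fun p => ⟪p.1, p.2⟫) γ := by
  refine (((hγ.integrable_norm_add_sq hμ hν).sub (hγ.integrable_add hμ hν)).div_const 2).congr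
    (ae_of_all _ fun p => ?_)
  simp only [Pi.sub_apply, norm_add_sq_real]
  ring

lemma integrable_norm_sub_sq_div_two (hγ : IsCoupling γ μ ν)
    (hμ : Integrable (fun x => ‖x‖ ^ 2) μ) (hν : Integrable (fun y => ‖y‖ ^ 2) ν) :
    Integrable (fun p => ‖p.1 - p.2‖ ^ 2 / 2) γ := by
  refine (((hγ.integrable_add hμ hν).div_const 2).sub (hγ.integrable_inner hμ hν)).congr
    (ae_of_all _ fun p => ?_)
  simp only [Pi.sub_apply, norm_sub_sq_real]
  ring

lemma transportCost_eq (hγ : IsCoupling γ μ ν) (hμ : Integrable (fun x => ‖x‖ ^ 2) μ)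
    (hν : Integrable (fun y => ‖y‖ ^ 2) ν) :
    transportCost γ = (∫ x, ‖x‖ ^ 2 ∂μ + ∫ y, ‖y‖ ^ 2 ∂ν) / 2 - ∫ p, ⟪p.1, p.2⟫ ∂γ := by
  rw [← hγ.integral_add hμ hν, ← integral_div,
    ← integral_sub ((hγ.integrable_add hμ hν).div_const 2) (hγ.integrable_inner hμ hν)]
  refine integral_congr_ae (ae_of_all _ fun p => ?_)
  simp only [norm_sub_sq_real]
  ring

lemma transportCost_le (hγ : IsCoupling γ μ ν) (hμ : Integrable (fun x => ‖x‖ ^ 2) μ)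
    (hν : Integrable (fun y => ‖y‖ ^ 2) ν) :
    transportCost γ ≤ ∫ x, ‖x‖ ^ 2 ∂μ + ∫ y, ‖y‖ ^ 2 ∂ν := by
  rw [← hγ.integral_add hμ hν]
  refine integral_mono (hγ.integrable_norm_sub_sq_div_two hμ hν) (hγ.integrable_add hμ hν)
    fun p => ?_
  simp only [sq]
  linarith [parallelogram_law_with_norm ℝ p.1 p.2, mul_self_nonneg ‖p.1 + p.2‖]

end IsCoupling

end TransportCost

section GradientPlan

variable {E : Type*} [NormedAddCommGroup E] [InnerProductSpace ℝ E] [CompleteSpace E]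
  [MeasurableSpace E] {μ : Measure E} {φ : E → ℝ} {F : E × E → ℝ}

/-- The transport plan `(id, ∇φ)_# μ`. -/
noncomputable def gradientPlan (μ : Measure E) (φ : E → ℝ) : Measure (E × E) :=
  μ.map fun x => (x, gradient φ x)

variable [BorelSpace E]

lemma integral_gradientPlan [SecondCountableTopology E] (hF : Continuous F) :
    ∫ p, F p ∂(gradientPlan μ φ) = ∫ x, F (x, gradient φ x) ∂μ :=
  integral_map (measurable_id.prodMk (measurable_gradient φ)).aemeasurable hF.aestronglyMeasurable

lemma integrable_comp_gradientPlan (hF : Integrable F (gradientPlan μ φ)) :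
    Integrable (fun x => F (x, gradient φ x)) μ :=
  hF.comp_measurable (measurable_id.prodMk (measurable_gradient φ))

end GradientPlan

namespace IsBrenierPotential

variable {d : ℕ} {μ ν : Measure (EuclideanSpace ℝ (Fin d))} {φ : EuclideanSpace ℝ (Fin d) → ℝ}
  {γ : Measure (EuclideanSpace ℝ (Fin d) × EuclideanSpace ℝ (Fin d))}

lemma measurePreserving_gradient (hφ : IsBrenierPotential μ ν φ) :
    MeasurePreserving (gradient φ) μ ν :=
  ⟨measurable_gradient φ, hφ.2.2⟩

lemma isCoupling_gradientPlan (hφ : IsBrenierPotential μ ν φ) :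
    IsCoupling (gradientPlan μ φ) μ ν := by
  have hgraph : Measurable fun x => (x, gradient φ x) :=
    measurable_id.prodMk (measurable_gradient φ)
  refine ⟨⟨measurable_fst, ?_⟩, ⟨measurable_snd, ?_⟩⟩
  · exact (Measure.map_map measurable_fst hgraph).trans Measure.map_id
  · exact (Measure.map_map measurable_snd hgraph).trans hφ.2.2

lemma integrable [IsFiniteMeasure μ] (hφ : IsBrenierPotential μ ν φ)
    (hμ : Integrable (fun x => ‖x‖ ^ 2) μ) (hν : Integrable (fun y => ‖y‖ ^ 2) ν) :
    Integrable φ μ := by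
  have hinner : Integrable (fun x => ⟪x, gradient φ x⟫) μ :=
    integrable_comp_gradientPlan (hφ.isCoupling_gradientPlan.integrable_inner hμ hν)
  refine integrable_of_le_of_le (f := φ) (g₁ := fun x => φ 0 - (‖gradient φ 0‖ ^ 2 + ‖x‖ ^ 2) / 2)
    (g₂ := fun x => φ 0 + ⟪x, gradient φ x⟫) hφ.2.1.continuous.aestronglyMeasurable
    (ae_of_all _ fun x => ?_) (ae_of_all _ fun x => ?_)
    ((integrable_const _).sub (((integrable_const _).add hμ).div_const 2))
    ((integrable_const _).add hinner)
  · have htangent := add_inner_gradient_le hφ.1 (Set.mem_univ 0) (Set.mem_univ x) (hφ.2.1 0)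
    rw [sub_zero] at htangent
    linarith [norm_add_sq_real (gradient φ 0) x, sq_nonneg ‖gradient φ 0 + x‖]
  · have htangent := add_inner_gradient_le hφ.1 (Set.mem_univ x) (Set.mem_univ 0) (hφ.2.1 x)
    rw [zero_sub, inner_neg_right, real_inner_comm] at htangent
    linarith

lemma fenchelConjugate_ne_top (hφ : IsBrenierPotential μ ν φ) :
    ∀ᵐ y ∂ν, fenchelConjugate φ y ≠ ⊤ := by
  have hfin : MeasurableSet {y | fenchelConjugate φ y ≠ ⊤} :=
    ((measurable_fenchelConjugate φ) (measurableSet_singleton ⊤)).compl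
  rw [← hφ.measurePreserving_gradient.map_eq,
    ae_map_iff (measurable_gradient φ).aemeasurable hfin]
  exact ae_of_all _ fun x => fenchelConjugate_gradient hφ.1 hφ.2.1 x ▸ EReal.coe_ne_top _

lemma integrable_toReal_fenchelConjugate [IsFiniteMeasure μ] (hφ : IsBrenierPotential μ ν φ)
    (hμ : Integrable (fun x => ‖x‖ ^ 2) μ) (hν : Integrable (fun y => ‖y‖ ^ 2) ν) :
    Integrable (fun y => (fenchelConjugate φ y).toReal) ν := by
  rw [← hφ.measurePreserving_gradient.integrable_comp
    (measurable_fenchelConjugate φ).ereal_toReal.aestronglyMeasurable]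
  simp only [Function.comp_def, fenchelConjugate_gradient hφ.1 hφ.2.1, EReal.toReal_coe]
  exact (integrable_comp_gradientPlan (hφ.isCoupling_gradientPlan.integrable_inner hμ hν)).sub
    (hφ.integrable hμ hν)

lemma integral_add_integral_fenchelConjugate [IsFiniteMeasure μ] (hφ : IsBrenierPotential μ ν φ)
    (hμ : Integrable (fun x => ‖x‖ ^ 2) μ) (hν : Integrable (fun y => ‖y‖ ^ 2) ν) :
    ∫ x, φ x ∂μ + ∫ y, (fenchelConjugate φ y).toReal ∂ν = ∫ p, ⟪p.1, p.2⟫ ∂(gradientPlan μ φ) := by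
  rw [← integral_comp_of_measurePreserving hφ.measurePreserving_gradient
    (measurable_fenchelConjugate φ).ereal_toReal.aestronglyMeasurable]
  simp only [fenchelConjugate_gradient hφ.1 hφ.2.1, EReal.toReal_coe]
  rw [integral_sub (integrable_comp_gradientPlan
    (hφ.isCoupling_gradientPlan.integrable_inner hμ hν)) (hφ.integrable hμ hν),
    add_sub_cancel, integral_gradientPlan (by fun_prop)]

variable {M : EuclideanSpace ℝ (Fin d) → EuclideanSpace ℝ (Fin d)}

lemma ae_norm_sub_resolvent_sq_le (hφ : IsBrenierPotential μ ν φ) (hγ : IsCoupling γ μ ν)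
    (hM : ∀ u, M u + gradient φ (M u) = u) :
    ∀ᵐ p ∂γ, ‖p.1 - M (p.1 + p.2)‖ ^ 2 ≤
      φ p.1 + (fenchelConjugate φ p.2).toReal - ⟪p.1, p.2⟫ := by
  filter_upwards [hγ.measurePreserving_snd.quasiMeasurePreserving.ae hφ.fenchelConjugate_ne_top]
    with p hp
  linarith [norm_sub_sq_le_of_add_gradient_eq hφ.1 hφ.2.1 (hM (p.1 + p.2)),
    inner_sub_le_toReal_fenchelConjugate hp (M (p.1 + p.2))]

lemma integrable_norm_sub_resolvent_sq [IsFiniteMeasure μ] (hφ : IsBrenierPotential μ ν φ)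
    (hγ : IsCoupling γ μ ν) (hμ : Integrable (fun x => ‖x‖ ^ 2) μ)
    (hν : Integrable (fun y => ‖y‖ ^ 2) ν) (hMm : Measurable M)
    (hM : ∀ u, M u + gradient φ (M u) = u) :
    Integrable (fun p => ‖p.1 - M (p.1 + p.2)‖ ^ 2) γ := by
  refine ((hγ.integrable_add (hφ.integrable hμ hν)
    (hφ.integrable_toReal_fenchelConjugate hμ hν)).sub (hγ.integrable_inner hμ hν)).mono'
    (by fun_prop) ?_
  filter_upwards [hφ.ae_norm_sub_resolvent_sq_le hγ hM] with p hp
  rwa [norm_of_nonneg (sq_nonneg _)]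

lemma integral_norm_sub_resolvent_sq_le [IsFiniteMeasure μ] (hφ : IsBrenierPotential μ ν φ)
    (hγ : IsCoupling γ μ ν) (hμ : Integrable (fun x => ‖x‖ ^ 2) μ)
    (hν : Integrable (fun y => ‖y‖ ^ 2) ν) (hMm : Measurable M)
    (hM : ∀ u, M u + gradient φ (M u) = u) :
    ∫ p, ‖p.1 - M (p.1 + p.2)‖ ^ 2 ∂γ ≤ transportCost γ - transportCost (gradientPlan μ φ) := by
  have hφi := hφ.integrable hμ hν
  have hψi := hφ.integrable_toReal_fenchelConjugate hμ hν
  have hinner := hγ.integrable_inner hμ hν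
  have hdual := hγ.integrable_add hφi hψi
  calc ∫ p, ‖p.1 - M (p.1 + p.2)‖ ^ 2 ∂γ
      ≤ ∫ p, (φ p.1 + (fenchelConjugate φ p.2).toReal - ⟪p.1, p.2⟫) ∂γ :=
        integral_mono_ae (hφ.integrable_norm_sub_resolvent_sq hγ hμ hν hMm hM)
          (hdual.sub hinner) (hφ.ae_norm_sub_resolvent_sq_le hγ hM)
    _ = ∫ p, ⟪p.1, p.2⟫ ∂(gradientPlan μ φ) - ∫ p, ⟪p.1, p.2⟫ ∂γ := by
        rw [integral_sub hdual hinner, hγ.integral_add hφi hψi,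
          hφ.integral_add_integral_fenchelConjugate hμ hν]
    _ = transportCost γ - transportCost (gradientPlan μ φ) := by
        rw [hγ.transportCost_eq hμ hν, hφ.isCoupling_gradientPlan.transportCost_eq hμ hν]
        ring

end IsBrenierPotential

/-- The logarithm of the density of the entropic plan with respect to `μ ⊗ ν`. -/
noncomputable def entLogDensity {d : ℕ} (ε : ℝ) (f g : EuclideanSpace ℝ (Fin d) → ℝ)
    (p : EuclideanSpace ℝ (Fin d) × EuclideanSpace ℝ (Fin d)) : ℝ :=
  (f p.1 + g p.2 - ‖p.1 - p.2‖ ^ 2 / 2) / ε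

namespace IsSchrodingerPair

variable {d : ℕ} {μ ν : Measure (EuclideanSpace ℝ (Fin d))} {ε : ℝ}
  {f g : EuclideanSpace ℝ (Fin d) → ℝ}

lemma symm (h : IsSchrodingerPair μ ν ε f g) : IsSchrodingerPair ν μ ε g f :=
  ⟨h.2.1, h.1, h.2.2.2, h.2.2.1⟩

lemma measurable_entLogDensity (h : IsSchrodingerPair μ ν ε f g) :
    Measurable (entLogDensity ε f g) := by
  have hf := h.1
  have hg := h.2.1
  unfold entLogDensity
  fun_prop

lemma lintegral_exp_entLogDensity (h : IsSchrodingerPair μ ν ε f g) (hε : ε ≠ 0)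
    (x : EuclideanSpace ℝ (Fin d)) :
    ∫⁻ y, ENNReal.ofReal (exp (entLogDensity ε f g (x, y))) ∂ν = 1 := by
  obtain ⟨hint, hpos, hfx⟩ := h.2.2.1 x
  have hsplit : ∀ y, exp (entLogDensity ε f g (x, y)) =
      exp (f x / ε) * exp ((g y - ‖x - y‖ ^ 2 / 2) / ε) := fun y => by
    rw [← exp_add, ← add_div, ← add_sub_assoc, entLogDensity]
  simp only [hsplit]
  rw [← ofReal_integral_eq_lintegral_ofReal (hint.const_mul _) (ae_of_all _ fun y => by positivity),
    integral_const_mul, hfx, neg_mul, neg_div, mul_div_cancel_left₀ _ hε, exp_neg, exp_log hpos,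
    inv_mul_cancel₀ hpos.ne', ENNReal.ofReal_one]

lemma isCoupling_entPlan [SFinite μ] [SFinite ν] (h : IsSchrodingerPair μ ν ε f g) (hε : ε ≠ 0) :
    IsCoupling (entPlan μ ν ε f g) μ ν := by
  have hswap : ∀ x y, entLogDensity ε f g (x, y) = entLogDensity ε g f (y, x) := fun x y => by
    simp only [entLogDensity, norm_sub_rev x y, add_comm (f x)]
  refine isCoupling_withDensity h.measurable_entLogDensity.exp.ennreal_ofReal
    (ae_of_all _ (h.lintegral_exp_entLogDensity hε)) (ae_of_all _ fun y => ?_)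
  refine (lintegral_congr fun x => ?_).trans (h.symm.lintegral_exp_entLogDensity hε y)
  rw [← hswap]
  rfl

lemma exists_le_norm_sq_add [NeZero ν] (h : IsSchrodingerPair μ ν ε f g) (hε : 0 < ε) :
    ∃ a, ∀ x, f x ≤ ‖x‖ ^ 2 + a := by
  have hg := h.2.1
  have hint : Integrable (fun y => exp ((g y - ‖y‖ ^ 2) / ε)) ν := by
    refine (h.2.2.1 0).1.mono' (by fun_prop) (ae_of_all _ fun y => ?_)
    rw [norm_of_nonneg (exp_pos _).le, zero_sub, norm_neg]
    gcongr
    linarith [sq_nonneg ‖y‖]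
  have hpos : 0 < ∫ y, exp ((g y - ‖y‖ ^ 2) / ε) ∂ν := integral_exp_pos hint
  refine ⟨-ε * log (∫ y, exp ((g y - ‖y‖ ^ 2) / ε) ∂ν), fun x => ?_⟩
  obtain ⟨hintx, -, hfx⟩ := h.2.2.1 x
  have hle : exp (-‖x‖ ^ 2 / ε) * ∫ y, exp ((g y - ‖y‖ ^ 2) / ε) ∂ν ≤
      ∫ y, exp ((g y - ‖x - y‖ ^ 2 / 2) / ε) ∂ν := by
    rw [← integral_const_mul]
    refine integral_mono (hint.const_mul _) hintx fun y => ?_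
    simp only [← exp_add, ← add_div]
    gcongr
    linarith [norm_sub_sq_real x y, norm_add_sq_real x y, sq_nonneg ‖x + y‖]
  have hlog := log_le_log (mul_pos (exp_pos _) hpos) hle
  rw [log_mul (exp_pos _).ne' hpos.ne', log_exp] at hlog
  have hmul := mul_le_mul_of_nonneg_left hlog hε.le
  rw [mul_add, mul_div_cancel₀ _ hε.ne'] at hmul
  linarith

variable [IsProbabilityMeasure μ] [IsProbabilityMeasure ν]

lemma integrable_left (h : IsSchrodingerPair μ ν ε f g) (hε : 0 < ε)
    (hμ : Integrable (fun x => ‖x‖ ^ 2) μ) (hν : Integrable (fun y => ‖y‖ ^ 2) ν) :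
    Integrable f μ := by
  obtain ⟨a, hfa⟩ := h.exists_le_norm_sq_add hε
  obtain ⟨b, hgb⟩ := h.symm.exists_le_norm_sq_add hε
  have hγ := h.isCoupling_entPlan hε.ne'
  have := hγ.isProbabilityMeasure
  have hneg : Integrable (fun p => max (-entLogDensity ε f g p) 0) (entPlan μ ν ε f g) :=
    integrable_neg_part_withDensity_exp h.measurable_entLogDensity
  have hlower : Integrable (fun p => -(ε * max (-entLogDensity ε f g p) 0 + (‖p.2‖ ^ 2 + b)))
      (entPlan μ ν ε f g) :=
    ((hneg.const_mul ε).add ((hγ.integrable_snd hν).add (integrable_const b))).neg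
  have hupper : Integrable (fun p => ‖p.1‖ ^ 2 + a) (entPlan μ ν ε f g) :=
    (hγ.integrable_fst hμ).add (integrable_const a)
  have hle : ∀ p, -(ε * max (-entLogDensity ε f g p) 0 + (‖p.2‖ ^ 2 + b)) ≤ f p.1 := fun p => by
    have hmul : ε * -entLogDensity ε f g p = -(f p.1 + g p.2 - ‖p.1 - p.2‖ ^ 2 / 2) := by
      rw [mul_neg, entLogDensity, mul_div_cancel₀ _ hε.ne']
    have hmax := mul_le_mul_of_nonneg_left (le_max_left (-entLogDensity ε f g p) 0) hε.le
    linarith [hgb p.2, sq_nonneg ‖p.1 - p.2‖]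
  rw [← hγ.measurePreserving_fst.integrable_comp h.1.aestronglyMeasurable]
  exact integrable_of_le_of_le (h.1.comp measurable_fst).aestronglyMeasurable (ae_of_all _ hle)
    (ae_of_all _ fun p => hfa p.1) hlower hupper

lemma integrable_right (h : IsSchrodingerPair μ ν ε f g) (hε : 0 < ε)
    (hμ : Integrable (fun x => ‖x‖ ^ 2) μ) (hν : Integrable (fun y => ‖y‖ ^ 2) ν) :
    Integrable g ν :=
  h.symm.integrable_left hε hν hμ

lemma integrable_entLogDensity (h : IsSchrodingerPair μ ν ε f g) (hε : 0 < ε)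
    (hμ : Integrable (fun x => ‖x‖ ^ 2) μ) (hν : Integrable (fun y => ‖y‖ ^ 2) ν) :
    Integrable (entLogDensity ε f g) (entPlan μ ν ε f g) :=
  have hγ := h.isCoupling_entPlan hε.ne'
  ((hγ.integrable_add (h.integrable_left hε hμ hν) (h.integrable_right hε hμ hν)).sub
    (hγ.integrable_norm_sub_sq_div_two hμ hν)).div_const ε

lemma integral_entLogDensity (h : IsSchrodingerPair μ ν ε f g) (hε : 0 < ε)
    (hμ : Integrable (fun x => ‖x‖ ^ 2) μ) (hν : Integrable (fun y => ‖y‖ ^ 2) ν) :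
    ∫ p, entLogDensity ε f g p ∂(entPlan μ ν ε f g) =
      (∫ x, f x ∂μ + ∫ y, g y ∂ν - transportCost (entPlan μ ν ε f g)) / ε := by
  have hγ := h.isCoupling_entPlan hε.ne'
  have hf := h.integrable_left hε hμ hν
  have hg := h.integrable_right hε hμ hν
  rw [transportCost, ← hγ.integral_add hf hg,
    ← integral_sub (hγ.integrable_add hf hg) (hγ.integrable_norm_sub_sq_div_two hμ hν),
    ← integral_div]
  rfl

end IsSchrodingerPair

section Gaussian

variable {V : Type*} [NormedAddCommGroup V] [InnerProductSpace ℝ V] [FiniteDimensional ℝ V]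
  [MeasurableSpace V] [BorelSpace V]

lemma lintegral_exp_neg_mul_sq_norm {b : ℝ} (hb : 0 < b) :
    ∫⁻ v : V, ENNReal.ofReal (exp (-b * ‖v‖ ^ 2)) =
      ENNReal.ofReal ((π / b) ^ (Module.finrank ℝ V / 2 : ℝ)) := by
  have hvalue := GaussianFourier.integral_rexp_neg_mul_sq_norm (V := V) hb
  have hint : Integrable fun v : V => exp (-b * ‖v‖ ^ 2) :=
    .of_integral_ne_zero (hvalue ▸ (by positivity))
  rw [← ofReal_integral_eq_lintegral_ofReal hint (ae_of_all _ fun v => (exp_pos _).le), hvalue]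

lemma lintegral_exp_neg_add_sub_sq {M : V → V} (hM : Measurable M) {a b : ℝ} (ha : 0 < a)
    (hb : 0 < b) :
    ∫⁻ p : V × V, ENNReal.ofReal (exp (-a * ‖p.1 + p.2‖ ^ 2 + -b * ‖p.1 - M (p.1 + p.2)‖ ^ 2))
        ∂(volume.prod volume) =
      ENNReal.ofReal ((π / a * (π / b)) ^ (Module.finrank ℝ V / 2 : ℝ)) := by
  let F : V × V → ENNReal := fun q =>
    ENNReal.ofReal (exp (-a * ‖q.2‖ ^ 2)) * ENNReal.ofReal (exp (-b * ‖q.1 - M q.2‖ ^ 2))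
  have hF : Measurable F := by fun_prop
  calc _ = ∫⁻ p : V × V, F (p.1, p.1 + p.2) ∂(volume.prod volume) :=
        lintegral_congr fun p => by rw [exp_add, ENNReal.ofReal_mul (exp_pos _).le]
    _ = ∫⁻ q, F q ∂(volume.prod volume) :=
        (measurePreserving_prod_add volume volume).lintegral_comp hF
    _ = ∫⁻ u, ENNReal.ofReal (exp (-a * ‖u‖ ^ 2)) *
          ∫⁻ x, ENNReal.ofReal (exp (-b * ‖x - M u‖ ^ 2)) := by
        rw [lintegral_prod_symm _ hF.aemeasurable]
        simp only [F, lintegral_const_mul' _ _ ENNReal.ofReal_ne_top]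
    _ = _ := by
        simp only [lintegral_sub_right_eq_self (fun x => ENNReal.ofReal (exp (-b * ‖x‖ ^ 2))),
          lintegral_exp_neg_mul_sq_norm hb]
        rw [lintegral_mul_const _ (by fun_prop), lintegral_exp_neg_mul_sq_norm ha,
          ← ENNReal.ofReal_mul (by positivity), ← mul_rpow (by positivity) (by positivity)]

end Gaussian

section Grid

variable {d : ℕ} {η : ℝ}

/-- The label of the cell containing `z` in the grid of half-open cubes of side `η`. -/
noncomputable def gridCell (η : ℝ) (z : EuclideanSpace ℝ (Fin d)) : Fin d → ℤ :=
  fun i => ⌊z i / η⌋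

lemma measurable_gridCell : Measurable (gridCell η : EuclideanSpace ℝ (Fin d) → Fin d → ℤ) :=
  measurable_pi_lambda _ fun i => Int.measurable_floor.comp (by fun_prop)

lemma norm_sub_sq_le_of_gridCell_eq (hη : 0 < η) {z w : EuclideanSpace ℝ (Fin d)}
    (h : gridCell η z = gridCell η w) : ‖z - w‖ ^ 2 ≤ d * η ^ 2 := by
  have hcoord : ∀ i, ‖(z - w) i‖ ^ 2 ≤ η ^ 2 := fun i => by
    have hfloor := Int.abs_sub_lt_one_of_floor_eq_floor (congrFun h i)
    rw [← sub_div, abs_div, abs_of_pos hη, div_lt_one hη] at hfloor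
    exact pow_le_pow_left₀ (norm_nonneg _) hfloor.le 2
  calc ‖z - w‖ ^ 2 = ∑ i, ‖(z - w) i‖ ^ 2 := EuclideanSpace.norm_sq_eq _
    _ ≤ ∑ _i : Fin d, η ^ 2 := Finset.sum_le_sum fun i _ => hcoord i
    _ = d * η ^ 2 := by simp

lemma volume_gridCell_fiber (hη : 0 < η) (j : Fin d → ℤ) :
    volume (gridCell η ⁻¹' {j} : Set (EuclideanSpace ℝ (Fin d))) = ENNReal.ofReal (η ^ d) := by
  have hcube : (gridCell η ⁻¹' {j} : Set (EuclideanSpace ℝ (Fin d))) =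
      WithLp.ofLp ⁻¹' (Set.univ.pi fun i => Set.Ico (j i * η) ((j i + 1) * η)) := by
    ext z
    simp only [gridCell, Set.mem_preimage, Set.mem_singleton_iff, funext_iff, Set.mem_pi,
      Set.mem_univ, true_implies, Int.floor_eq_iff, Set.mem_Ico, le_div_iff₀ hη, div_lt_iff₀ hη]
  have hside : ∀ i, (j i + 1) * η - j i * η = η := fun i => by ring
  rw [hcube, (PiLp.volume_preserving_ofLp (Fin d)).measure_preimage
    (MeasurableSet.univ_pi fun i => measurableSet_Ico).nullMeasurableSet, volume_pi_Ico]
  simp only [hside, Finset.prod_const, Finset.card_univ, Fintype.card_fin,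
    ENNReal.ofReal_pow hη.le]

/-- The image on the cells of the grid of the measure with Lebesgue density `exp (-‖v‖²)`. -/
noncomputable def gaussianGrid (d : ℕ) (η : ℝ) : Measure (Fin d → ℤ) :=
  (volume.withDensity fun v : EuclideanSpace ℝ (Fin d) =>
    ENNReal.ofReal (exp (-1 * ‖v‖ ^ 2))).map (gridCell η)

lemma gaussianGrid_univ : gaussianGrid d η Set.univ = ENNReal.ofReal (π ^ (d / 2 : ℝ)) := by
  rw [gaussianGrid, Measure.map_apply measurable_gridCell MeasurableSet.univ, Set.preimage_univ,
    withDensity_apply _ MeasurableSet.univ, Measure.restrict_univ,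
    lintegral_exp_neg_mul_sq_norm one_pos, div_one, finrank_euclideanSpace_fin]

instance : IsFiniteMeasure (gaussianGrid d η) :=
  ⟨gaussianGrid_univ (d := d) ▸ ENNReal.ofReal_lt_top⟩

lemma le_gaussianGrid_gridCell (hη : 0 < η) (z : EuclideanSpace ℝ (Fin d)) :
    ENNReal.ofReal (exp (-(2 * ‖z‖ ^ 2 + 2 * d * η ^ 2)) * η ^ d) ≤
      gaussianGrid d η {gridCell η z} := by
  have hcell : MeasurableSet (gridCell η ⁻¹' {gridCell η z}) :=
    measurable_gridCell (measurableSet_singleton _)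
  rw [gaussianGrid, Measure.map_apply measurable_gridCell (measurableSet_singleton _),
    withDensity_apply _ hcell, ENNReal.ofReal_mul (exp_pos _).le,
    ← volume_gridCell_fiber hη (gridCell η z), ← setLIntegral_const]
  refine setLIntegral_mono (by fun_prop) fun w hw => ?_
  gcongr
  have hparallelogram := parallelogram_law_with_norm ℝ (w - z) z
  rw [sub_add_cancel] at hparallelogram
  linarith [norm_sub_sq_le_of_gridCell_eq hη hw, mul_self_nonneg ‖w - z - z‖]

end Grid

section EntropyBound

variable {V : Type*} [NormedAddCommGroup V] [InnerProductSpace ℝ V] [FiniteDimensional ℝ V]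
  [MeasurableSpace V] [BorelSpace V]

lemma neg_integral_sq_le_integral_llr {γ : Measure (V × V)} [IsProbabilityMeasure γ]
    (hγ : γ ≪ volume.prod volume) (hllr : Integrable (llr γ (volume.prod volume)) γ) {M : V → V}
    (hM : Measurable M) (hadd : Integrable (fun p => ‖p.1 + p.2‖ ^ 2) γ)
    (hsub : Integrable (fun p => ‖p.1 - M (p.1 + p.2)‖ ^ 2) γ) {a b : ℝ} (ha : 0 < a) (hb : 0 < b) :
    -a * ∫ p, ‖p.1 + p.2‖ ^ 2 ∂γ + -b * ∫ p, ‖p.1 - M (p.1 + p.2)‖ ^ 2 ∂γ ≤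
      ∫ p, llr γ (volume.prod volume) p ∂γ + Module.finrank ℝ V / 2 * log (π / a * (π / b)) := by
  rw [← integral_const_mul, ← integral_const_mul,
    ← integral_add (hadd.const_mul _) (hsub.const_mul _), ← log_rpow (by positivity)]
  exact integral_le_integral_llr_add_log hγ (by fun_prop)
    ((hadd.const_mul _).add (hsub.const_mul _)) hllr (lintegral_exp_neg_add_sub_sq hM ha hb).le

end EntropyBound

lemma HasFiniteDifferentialEntropy.integrable_llr {d : ℕ}
    {μ : Measure (EuclideanSpace ℝ (Fin d))} [SigmaFinite μ]
    (hμ : HasFiniteDifferentialEntropy μ) (hac : μ ≪ volume) : Integrable (llr μ volume) μ :=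
  (integrable_rnDeriv_mul_log_iff hac).1 hμ

namespace IsSchrodingerPair

variable {d : ℕ} {μ ν : Measure (EuclideanSpace ℝ (Fin d))} {ε : ℝ}
  {f g : EuclideanSpace ℝ (Fin d) → ℝ}

section Entropy

variable [IsProbabilityMeasure μ] [IsProbabilityMeasure ν]

lemma llr_entPlan (h : IsSchrodingerPair μ ν ε f g) (hμac : μ ≪ volume) (hνac : ν ≪ volume) :
    llr (entPlan μ ν ε f g) (volume.prod volume) =ᵐ[entPlan μ ν ε f g]
      fun p => entLogDensity ε f g p + (llr μ volume p.1 + llr ν volume p.2) :=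
  (withDensity_absolutelyContinuous _ _).ae_le
    (llr_withDensity_exp_prod hμac hνac h.measurable_entLogDensity)

lemma integrable_llr_entPlan (h : IsSchrodingerPair μ ν ε f g) (hε : 0 < ε)
    (hμac : μ ≪ volume) (hνac : ν ≪ volume)
    (hμ : Integrable (fun x => ‖x‖ ^ 2) μ) (hν : Integrable (fun y => ‖y‖ ^ 2) ν)
    (hμent : HasFiniteDifferentialEntropy μ) (hνent : HasFiniteDifferentialEntropy ν) :
    Integrable (llr (entPlan μ ν ε f g) (volume.prod volume)) (entPlan μ ν ε f g) :=
  ((h.integrable_entLogDensity hε hμ hν).add ((h.isCoupling_entPlan hε.ne').integrable_add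
    (hμent.integrable_llr hμac) (hνent.integrable_llr hνac))).congr (h.llr_entPlan hμac hνac).symm

lemma integral_llr_entPlan (h : IsSchrodingerPair μ ν ε f g) (hε : 0 < ε)
    (hμac : μ ≪ volume) (hνac : ν ≪ volume)
    (hμ : Integrable (fun x => ‖x‖ ^ 2) μ) (hν : Integrable (fun y => ‖y‖ ^ 2) ν)
    (hμent : HasFiniteDifferentialEntropy μ) (hνent : HasFiniteDifferentialEntropy ν) :
    ∫ p, llr (entPlan μ ν ε f g) (volume.prod volume) p ∂(entPlan μ ν ε f g) =
      (∫ x, f x ∂μ + ∫ y, g y ∂ν - transportCost (entPlan μ ν ε f g)) / ε +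
        (∫ x, llr μ volume x ∂μ + ∫ y, llr ν volume y ∂ν) := by
  have hγ := h.isCoupling_entPlan hε.ne'
  have hμllr := hμent.integrable_llr hμac
  have hνllr := hνent.integrable_llr hνac
  rw [integral_congr_ae (h.llr_entPlan hμac hνac),
    integral_add (h.integrable_entLogDensity hε hμ hν) (hγ.integrable_add hμllr hνllr),
    h.integral_entLogDensity hε hμ hν, hγ.integral_add hμllr hνllr]

end Entropy

variable {φ : EuclideanSpace ℝ (Fin d) → ℝ}

/-- The Kantorovich potential `x ↦ ‖x‖ ^ 2 / 2 - φ x` enters at `x` and at `y` with opposite signs: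
it cancels after integration, and pointwise only the Bregman divergence of `φ` remains. -/
lemma exp_add_le_of_gridCell_eq (hφ : IsBrenierPotential μ ν φ) (hε : 0 < ε)
    {x y : EuclideanSpace ℝ (Fin d)}
    (hxy : gridCell √ε (x + gradient φ x) = gridCell √ε (y + gradient φ y)) :
    ENNReal.ofReal (exp (((f x - (‖x‖ ^ 2 / 2 - φ x)) / ε -
        (2 * ‖x + gradient φ x‖ ^ 2 + (2 * d * ε - d / 2 * log ε))) +
        ((g (gradient φ y) + (‖y‖ ^ 2 / 2 - φ y) - ‖y - gradient φ y‖ ^ 2 / 2) / ε - d / 4))) ≤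
      ENNReal.ofReal (exp (entLogDensity ε f g (x, gradient φ y))) *
        gaussianGrid d √ε {gridCell √ε (x + gradient φ x)} := by
  have hbregman : (φ x - φ y - ⟪x - y, gradient φ y⟫) / ε ≤ d / 4 := by
    have hdiam := norm_sub_sq_le_of_gridCell_eq (sqrt_pos.2 hε) hxy
    rw [sq_sqrt hε.le] at hdiam
    rw [div_le_iff₀ hε]
    linarith [bregman_le_norm_sub_sq_div_four hφ.1 hφ.2.1 x y]
  have hexponent : (f x - (‖x‖ ^ 2 / 2 - φ x)) / ε +
      (g (gradient φ y) + (‖y‖ ^ 2 / 2 - φ y) - ‖y - gradient φ y‖ ^ 2 / 2) / ε =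
      entLogDensity ε f g (x, gradient φ y) + (φ x - φ y - ⟪x - y, gradient φ y⟫) / ε := by
    simp only [entLogDensity, norm_sub_sq_real, inner_sub_left]
    ring
  have hpow : √ε ^ d = exp (d / 2 * log ε) := by
    rw [← rpow_natCast, sqrt_eq_rpow, ← rpow_mul hε.le, rpow_def_of_pos hε]
    ring_nf
  refine le_trans ?_ (mul_le_mul_right (le_gaussianGrid_gridCell (sqrt_pos.2 hε) _) _)
  rw [← ENNReal.ofReal_mul (exp_pos _).le, sq_sqrt hε.le, hpow, ← exp_add, ← exp_add]
  exact ENNReal.ofReal_le_ofReal (exp_le_exp.2 (by linarith))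

lemma lintegral_exp_entLogDensity_gradient (h : IsSchrodingerPair μ ν ε f g)
    (hφ : IsBrenierPotential μ ν φ) (hε : ε ≠ 0) (x : EuclideanSpace ℝ (Fin d)) :
    ∫⁻ y, ENNReal.ofReal (exp (entLogDensity ε f g (x, gradient φ y))) ∂μ = 1 :=
  (hφ.measurePreserving_gradient.lintegral_comp
    (h.measurable_entLogDensity.comp measurable_prodMk_left).exp.ennreal_ofReal).trans
      (h.lintegral_exp_entLogDensity hε x)

variable [IsProbabilityMeasure μ] [IsProbabilityMeasure ν]

lemma integral_add_integral_sub_transportCost_div_le (h : IsSchrodingerPair μ ν ε f g)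
    (hφ : IsBrenierPotential μ ν φ) (hε : 0 < ε)
    (hμ : Integrable (fun x => ‖x‖ ^ 2) μ) (hν : Integrable (fun y => ‖y‖ ^ 2) ν) :
    (∫ x, f x ∂μ + ∫ y, g y ∂ν - transportCost (gradientPlan μ φ)) / ε ≤
      d / 2 * log π - d / 2 * log ε + 2 * ∫ p, ‖p.1 + p.2‖ ^ 2 ∂(gradientPlan μ φ) +
        2 * d * ε + d / 4 := by
  have hγ := hφ.isCoupling_gradientPlan
  have hT := hφ.measurePreserving_gradient
  have hu : Integrable (fun x => ‖x‖ ^ 2 / 2 - φ x) μ :=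
    (hμ.div_const 2).sub (hφ.integrable hμ hν)
  have hf := h.integrable_left hε hμ hν
  have hg : Integrable (fun x => g (gradient φ x)) μ :=
    hT.integrable_comp_of_integrable (h.integrable_right hε hμ hν)
  have hadd : Integrable (fun x => 2 * ‖x + gradient φ x‖ ^ 2) μ :=
    (integrable_comp_gradientPlan (hγ.integrable_norm_add_sq hμ hν)).const_mul 2
  have hcost : Integrable (fun x => ‖x - gradient φ x‖ ^ 2 / 2) μ :=
    integrable_comp_gradientPlan (hγ.integrable_norm_sub_sq_div_two hμ hν)
  have hA : Integrable (fun x => (f x - (‖x‖ ^ 2 / 2 - φ x)) / ε) μ := (hf.sub hu).div_const ε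
  have hA' : Integrable
      (fun x => 2 * ‖x + gradient φ x‖ ^ 2 + (2 * d * ε - d / 2 * log ε)) μ :=
    hadd.add (integrable_const _)
  have hgu : Integrable (fun x => g (gradient φ x) + (‖x‖ ^ 2 / 2 - φ x)) μ := hg.add hu
  have hB : Integrable (fun x =>
      (g (gradient φ x) + (‖x‖ ^ 2 / 2 - φ x) - ‖x - gradient φ x‖ ^ 2 / 2) / ε) μ :=
    (hgu.sub hcost).div_const ε
  have hblock := integral_add_integral_le_log_of_exp_add_le
    (measurable_gridCell.comp (measurable_id.add hT.measurable))
    (hA.sub hA') (hB.sub (integrable_const (d / 4 : ℝ)))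
    (h.measurable_entLogDensity.comp
      (measurable_fst.prodMk (hT.measurable.comp measurable_snd))).exp.ennreal_ofReal
    (fun x => (h.lintegral_exp_entLogDensity_gradient hφ hε.ne' x).le)
    (fun x y => exp_add_le_of_gridCell_eq hφ hε)
  simp only [Pi.sub_apply] at hblock
  rw [measureReal_def, gaussianGrid_univ, ENNReal.toReal_ofReal (by positivity), log_rpow pi_pos,
    integral_sub hA hA', integral_sub hB (integrable_const _), integral_div, integral_div,
    integral_sub hf hu, integral_sub hgu hcost, integral_add hg hu,
    integral_add hadd (integrable_const _), integral_const, integral_const, probReal_univ,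
    one_smul, one_smul, integral_const_mul,
    integral_comp_of_measurePreserving hT h.2.1.aestronglyMeasurable] at hblock
  rw [transportCost, integral_gradientPlan (by fun_prop), integral_gradientPlan (by fun_prop)]
  simp only [add_div, sub_div] at hblock ⊢
  linarith

lemma transportCost_sub_le (h : IsSchrodingerPair μ ν ε f g) (hφ : IsBrenierPotential μ ν φ)
    (hε : 0 < ε) (hμac : μ ≪ volume) (hνac : ν ≪ volume)
    (hμ : Integrable (fun x => ‖x‖ ^ 2) μ) (hν : Integrable (fun y => ‖y‖ ^ 2) ν)
    (hμent : HasFiniteDifferentialEntropy μ) (hνent : HasFiniteDifferentialEntropy ν) :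
    transportCost (entPlan μ ν ε f g) - transportCost (gradientPlan μ φ) ≤
      2 * ε * (∫ x, llr μ volume x ∂μ + ∫ y, llr ν volume y ∂ν +
        6 * (∫ x, ‖x‖ ^ 2 ∂μ + ∫ y, ‖y‖ ^ 2 ∂ν) + 2 * d * ε + d / 4 +
        d / 2 * log (2 * π ^ 3)) := by
  obtain ⟨M, hMlip, hM⟩ := exists_lipschitz_resolvent hφ.1 hφ.2.1
  have hMm := hMlip.continuous.measurable
  have hγ := h.isCoupling_entPlan hε.ne'
  have := hγ.isProbabilityMeasure
  have hγac : entPlan μ ν ε f g ≪ volume.prod volume :=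
    (withDensity_absolutelyContinuous _ _).trans (hμac.prod hνac)
  have hentropy := neg_integral_sq_le_integral_llr hγac
    (h.integrable_llr_entPlan hε hμac hνac hμ hν hμent hνent) hMm
    (hγ.integrable_norm_add_sq hμ hν)
    (hφ.integrable_norm_sub_resolvent_sq hγ hμ hν hMm hM) one_pos
    (b := 1 / (2 * ε)) (by positivity)
  rw [h.integral_llr_entPlan hε hμac hνac hμ hν hμent hνent, finrank_euclideanSpace_fin]
    at hentropy
  have hdetach := mul_le_mul_of_nonneg_left
    (hφ.integral_norm_sub_resolvent_sq_le hγ hμ hν hMm hM) (a := 1 / (2 * ε)) (by positivity)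
  have hdual := h.integral_add_integral_sub_transportCost_div_le hφ hε hμ hν
  have hlog : log (π / 1 * (π / (1 / (2 * ε)))) + log π - log ε = log (2 * π ^ 3) := by
    rw [← log_mul (by positivity) (by positivity), ← log_div (by positivity) (by positivity)]
    congr 1
    field_simp
  have hgap : (∫ x, f x ∂μ + ∫ y, g y ∂ν - transportCost (entPlan μ ν ε f g)) / ε =
      (∫ x, f x ∂μ + ∫ y, g y ∂ν - transportCost (gradientPlan μ φ)) / ε -
        2 * (1 / (2 * ε) * (transportCost (entPlan μ ν ε f g) -
          transportCost (gradientPlan μ φ))) := by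
    field_simp
    ring
  have hadd := hγ.integral_norm_add_sq_le hμ hν
  have hadd₀ := hφ.isCoupling_gradientPlan.integral_norm_add_sq_le hμ hν
  rw [← div_le_iff₀' (by positivity), div_eq_inv_mul, ← one_div, ← hlog]
  linarith

end IsSchrodingerPair

lemma integrable_norm_sq_of_integrable_norm_rpow {E : Type*} [NormedAddCommGroup E]
    [MeasurableSpace E] [BorelSpace E] {μ : Measure E} [IsFiniteMeasure μ] {p : ℝ} (hp : 2 ≤ p)
    (h : Integrable (fun x => ‖x‖ ^ p) μ) : Integrable (fun x => ‖x‖ ^ 2) μ := by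
  refine (h.add (integrable_const 1)).mono' (by fun_prop) (ae_of_all _ fun x => ?_)
  rw [norm_of_nonneg (sq_nonneg _), Pi.add_apply, ← rpow_two]
  rcases le_total ‖x‖ 1 with hx | hx
  · exact (rpow_le_one (norm_nonneg x) hx two_pos.le).trans (le_add_of_nonneg_left (by positivity))
  · exact (rpow_le_rpow_of_exponent_le hx hp).trans (le_add_of_nonneg_right one_pos.le)

theorem cost_difference_le_linear_general {d : ℕ} (μ ν : Measure (EuclideanSpace ℝ (Fin d)))
    [IsProbabilityMeasure μ] [IsProbabilityMeasure ν] (hμac : μ ≪ volume) (hνac : ν ≪ volume)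
    (hμ : Integrable (fun x => ‖x‖ ^ 2) μ) (hν : Integrable (fun y => ‖y‖ ^ 2) ν)
    (hμent : HasFiniteDifferentialEntropy μ) (hνent : HasFiniteDifferentialEntropy ν)
    (φ₀ : EuclideanSpace ℝ (Fin d) → ℝ) (hφ₀ : IsBrenierPotential μ ν φ₀) :
    ∃ C > (0 : ℝ), ∀ ε > (0 : ℝ), ∀ f g : EuclideanSpace ℝ (Fin d) → ℝ,
      IsSchrodingerPair μ ν ε f g →
      transportCost (entPlan μ ν ε f g) - transportCost (gradientPlan μ φ₀) ≤ C * ε := by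
  let m := ∫ x, ‖x‖ ^ 2 ∂μ + ∫ y, ‖y‖ ^ 2 ∂ν
  let K := ∫ x, llr μ volume x ∂μ + ∫ y, llr ν volume y ∂ν + 6 * m + 2 * d + d / 4 +
    d / 2 * log (2 * π ^ 3)
  have hm : 0 ≤ m := by positivity
  refine ⟨2 * |K| + m + 1, by positivity, fun ε hε f g h => ?_⟩
  rcases le_total ε 1 with hε1 | hε1
  · calc transportCost (entPlan μ ν ε f g) - transportCost (gradientPlan μ φ₀)
        ≤ 2 * ε * (∫ x, llr μ volume x ∂μ + ∫ y, llr ν volume y ∂ν + 6 * m + 2 * d * ε + d / 4 +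
            d / 2 * log (2 * π ^ 3)) :=
          h.transportCost_sub_le hφ₀ hε hμac hνac hμ hν hμent hνent
      _ ≤ 2 * ε * |K| := by
          gcongr
          refine le_trans ?_ (le_abs_self K)
          unfold K
          linarith [mul_le_of_le_one_right (by positivity : 0 ≤ 2 * (d : ℝ)) hε1]
      _ ≤ (2 * |K| + m + 1) * ε := by linarith [mul_nonneg hm hε.le]
  · calc transportCost (entPlan μ ν ε f g) - transportCost (gradientPlan μ φ₀)
        ≤ transportCost (entPlan μ ν ε f g) := sub_le_self _ (transportCost_nonneg _)
      _ ≤ m := (h.isCoupling_entPlan hε.ne').transportCost_le hμ hν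
      _ ≤ m * ε := le_mul_of_one_le_right hm hε1
      _ ≤ (2 * |K| + m + 1) * ε := by
          gcongr
          linarith [abs_nonneg K]

/-- under moment and entropy assumptions, the transport cost of the entropic
plan exceeds the optimal cost by at most `C ε`. -/
theorem cost_difference_le_linear {d : ℕ} (δ : ℝ) (hδ : 0 < δ)
    (μ ν : Measure (EuclideanSpace ℝ (Fin d)))
    [IsProbabilityMeasure μ] [IsProbabilityMeasure ν]
    (hμac : μ ≪ (volume : Measure (EuclideanSpace ℝ (Fin d))))
    (hνac : ν ≪ (volume : Measure (EuclideanSpace ℝ (Fin d))))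
    (hμmom : Integrable (fun x => ‖x‖ ^ (2 + δ)) μ)
    (hνmom : Integrable (fun y => ‖y‖ ^ (2 + δ)) ν)
    (hμent : HasFiniteDifferentialEntropy μ) (hνent : HasFiniteDifferentialEntropy ν)
    (φ₀ : EuclideanSpace ℝ (Fin d) → ℝ) (hφ₀ : IsBrenierPotential μ ν φ₀) :
    ∃ C > (0 : ℝ), ∀ ε > (0 : ℝ), ∀ f g : EuclideanSpace ℝ (Fin d) → ℝ,
      IsSchrodingerPair μ ν ε f g →
      (∫ p, ‖p.1 - p.2‖ ^ 2 / 2 ∂(entPlan μ ν ε f g)) -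
        (∫ p, ‖p.1 - p.2‖ ^ 2 / 2 ∂(Measure.map (fun x => (x, gradient φ₀ x)) μ)) ≤
          C * ε :=
  cost_difference_le_linear_general μ ν hμac hνac
    (integrable_norm_sq_of_integrable_norm_rpow (le_add_of_nonneg_right hδ.le) hμmom)
    (integrable_norm_sq_of_integrable_norm_rpow (le_add_of_nonneg_right hδ.le) hνmom)
    hμent hνent φ₀ hφ₀
end

section
/- Let M be a real symmetric positive definite d×d matrix. Then for every ε > 0, ‖(M + (ε²/4) I_d)^{1/2} − M^{1/2}‖_op ≤ (ε²/8) ‖M^{−1}‖_op^{1/2} + (ε⁴/32) ‖M^{−1}‖_op^{3/2}. -/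
open Matrix

/-- The operator norm of a square matrix with respect to the Euclidean norm on `ℝ^d`. -/
noncomputable def matOpNorm {d : ℕ} (M : Matrix (Fin d) (Fin d) ℝ) : ℝ :=
  ‖(Matrix.toEuclideanCLM (𝕜 := ℝ) M :
      EuclideanSpace ℝ (Fin d) →L[ℝ] EuclideanSpace ℝ (Fin d))‖

/-!
Both `√(a + r)` and `√a` are functions of `a`, so the functional calculus bounds the norm of their
difference by the supremum of `√(x + r) - √x = r / (√(x + r) + √x) ≤ r / (2 √x)` over the spectrum
of `a`. There `x⁻¹` lies in the spectrum of `a⁻¹`, hence `1 / √x ≤ ‖a⁻¹‖ ^ (1 / 2)`. With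
`r = ε ^ 2 / 4` this is already the first term of the bound; the term in `ε ^ 4` is slack.
-/

lemma abs_sqrt_add_sub_sqrt_le {x r : ℝ} (hx : 0 < x) (hr : 0 ≤ r) :
    |√(x + r) - √x| ≤ r / 2 * √x⁻¹ := by
  have hmono : √x ≤ √(x + r) := Real.sqrt_le_sqrt (by linarith)
  have hpos : 0 < √x := Real.sqrt_pos.2 hx
  have hmul : (√(x + r) - √x) * (√(x + r) + √x) = r := by
    linear_combination Real.sq_sqrt (add_nonneg hx.le hr) - Real.sq_sqrt hx.le
  rw [abs_of_nonneg (sub_nonneg.2 hmono), Real.sqrt_inv, ← div_eq_mul_inv, le_div_iff₀ hpos]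
  linarith [mul_le_mul_of_nonneg_left hmono (sub_nonneg.2 hmono)]

section FunctionalCalculus

open scoped Ring

lemma inv_mem_spectrum_ringInverse {𝕜 A : Type*} [Semifield 𝕜] [Ring A] [Algebra 𝕜 A]
    {a : A} {x : 𝕜} (ha : IsUnit a) (hx : x ∈ spectrum 𝕜 a) : x⁻¹ ∈ spectrum 𝕜 a⁻¹ʳ := by
  obtain ⟨u, rfl⟩ := ha
  rw [Ring.inverse_unit]
  exact (spectrum.inv_mem_iff (r := Units.mk0 x (spectrum.ne_zero_of_mem_of_unit hx))).1 hx

lemma sqrt_add_algebraMap_eq_cfc {A : Type*} [Ring A] [PartialOrder A] [StarRing A]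
    [StarOrderedRing A] [TopologicalSpace A] [IsSemitopologicalRing A] [T2Space A] [Algebra ℝ A]
    [ContinuousFunctionalCalculus ℝ A IsSelfAdjoint] [NonnegSpectrumClass ℝ A]
    {a : A} (ha : 0 ≤ a) {r : ℝ} (hr : 0 ≤ r) :
    CFC.sqrt (a + algebraMap ℝ A r) = cfc (fun x : ℝ ↦ √(x + r)) a := by
  refine CFC.sqrt_unique ?_ (cfc_nonneg fun x _ ↦ Real.sqrt_nonneg _)
  calc cfc (fun x : ℝ ↦ √(x + r)) a * cfc (fun x : ℝ ↦ √(x + r)) a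
      = cfc (fun x : ℝ ↦ √(x + r) * √(x + r)) a := (cfc_mul ..).symm
    _ = cfc (fun x : ℝ ↦ x + r) a :=
      cfc_congr fun x hx ↦ Real.mul_self_sqrt (add_nonneg (spectrum_nonneg_of_nonneg ha hx) hr)
    _ = a + algebraMap ℝ A r := by rw [cfc_add_const r (fun x ↦ x) a, cfc_id' ℝ a]

theorem sqrt_perturbation_opNorm_bound_general {A : Type*} [NormedRing A] [PartialOrder A]
    [StarRing A] [StarOrderedRing A] [NormedAlgebra ℝ A]
    [IsometricContinuousFunctionalCalculus ℝ A IsSelfAdjoint] [NonnegSpectrumClass ℝ A]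
    {a : A} (ha : IsStrictlyPositive a) {r : ℝ} (hr : 0 ≤ r) :
    ‖CFC.sqrt (a + algebraMap ℝ A r) - CFC.sqrt a‖ ≤ r / 2 * ‖a⁻¹ʳ‖ ^ (1 / 2 : ℝ) := by
  have hsqrt : CFC.sqrt a = cfc Real.sqrt a := by
    simpa using sqrt_add_algebraMap_eq_cfc ha.nonneg le_rfl
  rw [sqrt_add_algebraMap_eq_cfc ha.nonneg hr, hsqrt, ← cfc_sub .., ← Real.sqrt_eq_rpow]
  refine norm_cfc_le (by positivity) fun x hx ↦ ?_
  have hinv : x⁻¹ ≤ ‖a⁻¹ʳ‖ := (le_abs_self _).trans <|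
    IsometricContinuousFunctionalCalculus.norm_spectrum_le _
      (inv_mem_spectrum_ringInverse ha.isUnit hx) ha.isSelfAdjoint.ringInverse
  calc ‖√(x + r) - √x‖ ≤ r / 2 * √x⁻¹ := abs_sqrt_add_sub_sqrt_le (ha.spectrum_pos hx) hr
    _ ≤ r / 2 * √‖a⁻¹ʳ‖ := by gcongr

end FunctionalCalculus

open scoped Matrix.Norms.L2Operator in
lemma matOpNorm_eq_norm {d : ℕ} (M : Matrix (Fin d) (Fin d) ℝ) : matOpNorm M = ‖M‖ := rfl

open scoped MatrixOrder Matrix.Norms.L2Operator in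
lemma matOpNorm_sub_le_of_mul_self_eq {d : ℕ} {M S T : Matrix (Fin d) (Fin d) ℝ} {r : ℝ}
    (hM : M.PosDef) (hr : 0 ≤ r) (hS : S.PosSemidef) (hSM : S * S = M)
    (hT : T.PosSemidef) (hTM : T * T = M + r • (1 : Matrix (Fin d) (Fin d) ℝ)) :
    matOpNorm (T - S) ≤ r / 2 * matOpNorm M⁻¹ ^ (1 / 2 : ℝ) := by
  rw [← Algebra.algebraMap_eq_smul_one] at hTM
  rw [matOpNorm_eq_norm, matOpNorm_eq_norm, ← CFC.sqrt_unique hSM hS.nonneg,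
    ← CFC.sqrt_unique hTM hT.nonneg, nonsing_inv_eq_ringInverse]
  exact sqrt_perturbation_opNorm_bound_general hM.isStrictlyPositive hr

/-- `‖(M + (ε²/4) I)^{1/2} − M^{1/2}‖_op ≤ (ε²/8)‖M⁻¹‖_op^{1/2} + (ε⁴/32)‖M⁻¹‖_op^{3/2}`
for a symmetric positive definite matrix `M`; the square roots are characterized as the unique
symmetric positive definite matrices squaring to `M + (ε²/4) I` and `M` respectively. -/
theorem sqrt_perturbation_opNorm_bound {d : ℕ}
    (M : Matrix (Fin d) (Fin d) ℝ) (hM : M.PosDef) (ε : ℝ) (hε : 0 < ε)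
    (sM : Matrix (Fin d) (Fin d) ℝ) (hsM : sM.PosDef) (hsM2 : sM * sM = M)
    (sMε : Matrix (Fin d) (Fin d) ℝ) (hsMε : sMε.PosDef)
    (hsMε2 : sMε * sMε = M + (ε ^ 2 / 4) • (1 : Matrix (Fin d) (Fin d) ℝ)) :
    matOpNorm (sMε - sM) ≤
      ε ^ 2 / 8 * matOpNorm M⁻¹ ^ ((1 : ℝ) / 2) +
      ε ^ 4 / 32 * matOpNorm M⁻¹ ^ ((3 : ℝ) / 2) := by
  have hnonneg : 0 ≤ matOpNorm M⁻¹ := norm_nonneg _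
  calc matOpNorm (sMε - sM)
      ≤ ε ^ 2 / 4 / 2 * matOpNorm M⁻¹ ^ ((1 : ℝ) / 2) :=
        matOpNorm_sub_le_of_mul_self_eq hM (by positivity) hsM.posSemidef hsM2
          hsMε.posSemidef hsMε2
    _ = ε ^ 2 / 8 * matOpNorm M⁻¹ ^ ((1 : ℝ) / 2) := by ring
    _ ≤ _ := le_add_of_nonneg_right (by positivity)
end
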